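/- For any n ≥ 2k ≥ 2 and any function c from the k-element subsets of {1,...,n} to {1,...,n-2k+1}, there exist two disjoint k-element subsets A and B of {1,...,n} with c(A) = c(B). -/

import Mathlib

/-!
Suppose `c` is a proper colouring. Matoušek's labelling turns it into an antipodal labelling,
without complementary comparable pairs, of the poset of nonzero signed sets `(A, B)` on the ground
set: small signed sets are labelled by their size, large ones by the colour of a member of the
family inside `A` or `B`. This uses fewer magnitudes than there are points, contradicting Tucker's
lemma for the barycentrically subdivided octahedral sphere.

Tucker's lemma follows from Fan's parity count: among the maximal flags of signed sets, the number
whose labels, sorted by magnitude, alternate in sign from a prescribed first sign is odd.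
Writing the sphere as a cap and its antipode, this number is that of alternating flags, with either
first sign, in the cap. Modulo 2, it is also the number of alternating facets of flags in the cap,
and thus of alternating flags in the boundary of the cap, the sphere of one dimension less.
-/

namespace KneserLovasz

section Cochains

variable {T : Type*}

/-- The facets of the simplex with vertex list `l`, that is, its simplicial boundary. A multiset of
vertex lists stands for a chain with coefficients in `ZMod 2`; the empty list is the
`(-1)`-dimensional simplex of the augmented complex. -/
def facets : List T → Multiset (List T)
  | [] => 0
  | x :: l => l ::ₘ (facets l).map (x :: ·)

/-- The augmented simplicial coboundary of a cochain modulo 2. -/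
def coboundary (φ : List T → ZMod 2) (l : List T) : ZMod 2 :=
  ((facets l).map φ).sum

theorem coboundary_nil (φ : List T → ZMod 2) : coboundary φ [] = 0 := by
  simp [coboundary, facets]

theorem coboundary_cons (φ : List T → ZMod 2) (x : T) (l : List T) :
    coboundary φ (x :: l) = φ l + coboundary (fun t => φ (x :: t)) l := by
  simp [coboundary, facets]

theorem coboundary_add (φ ψ : List T → ZMod 2) (l : List T) :
    coboundary (fun t => φ t + ψ t) l = coboundary φ l + coboundary ψ l :=
  Multiset.sum_map_add

theorem coboundary_zero (l : List T) : coboundary (fun _ => 0) l = 0 := by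
  simp [coboundary]

theorem sublist_of_mem_facets {l t : List T} (ht : t ∈ facets l) : t.Sublist l := by
  induction l generalizing t with
  | nil => simp [facets] at ht
  | cons x l ih =>
    rw [facets, Multiset.mem_cons, Multiset.mem_map] at ht
    obtain rfl | ⟨u, hu, rfl⟩ := ht
    · exact List.sublist_cons_self x t
    · exact (ih hu).cons_cons x

theorem facets_map {S : Type*} (f : S → T) (l : List S) :
    facets (l.map f) = (facets l).map (List.map f) := by
  induction l with
  | nil => rfl
  | cons x l ih => simp [facets, ih]

theorem coboundary_map {S : Type*} (f : S → T) (φ : List T → ZMod 2) (l : List S) :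
    coboundary φ (l.map f) = coboundary (fun t => φ (t.map f)) l := by
  simp [coboundary, facets_map]

theorem map_coe_facets_cons (x : T) (l : List T) :
    (facets (x :: l)).map (Multiset.ofList ·) =
      (l : Multiset T) ::ₘ ((facets l).map (Multiset.ofList ·)).map (x ::ₘ ·) := by
  simp [facets, Function.comp_def]

theorem map_coe_facets_of_perm {l l' : List T} (h : l.Perm l') :
    (facets l).map (Multiset.ofList ·) = (facets l').map (Multiset.ofList ·) := by
  induction h with
  | nil => rfl
  | cons x hl ih => rw [map_coe_facets_cons, map_coe_facets_cons, ih, Multiset.coe_eq_coe.2 hl]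
  | swap x y l =>
    simp only [map_coe_facets_cons, Multiset.map_cons, Multiset.map_map, Function.comp_def,
      ← Multiset.cons_coe, Multiset.cons_swap x y, Multiset.cons_swap (x ::ₘ (l : Multiset T))]
  | trans _ _ ih₁ ih₂ => exact ih₁.trans ih₂

theorem coboundary_eq_of_perm (g : Multiset T → ZMod 2) {l l' : List T} (h : l.Perm l') :
    coboundary (fun t => g t) l = coboundary (fun t => g t) l' := by
  simpa [coboundary, Function.comp_def] using
    congrArg (fun K => (K.map g).sum) (map_coe_facets_of_perm h)

end Cochains

section Cone

variable {T : Type*} (f : T → T) (e : T)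

/-- The cone over a simplex of an order complex: the prism between the simplex and its image
under `f`, together with the join of that image with the apex `e`. -/
def cone : List T → Multiset (List T)
  | [] => {[e]}
  | x :: l => (f x :: x :: l) ::ₘ (cone l).map (f x :: ·)

theorem sum_map_cone_cons (φ : List T → ZMod 2) (x : T) (l : List T) :
    ((cone f e (x :: l)).map φ).sum =
      φ (f x :: x :: l) + ((cone f e l).map fun t => φ (f x :: t)).sum := by
  simp [cone]

theorem sum_map_coboundary_cone (φ : List T → ZMod 2) (l : List T) :
    ((cone f e l).map (coboundary φ)).sum =
      φ l + coboundary (fun u => ((cone f e u).map φ).sum) l := by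
  induction l generalizing φ with
  | nil => simp [cone, coboundary_cons, coboundary_nil]
  | cons x l ih =>
    simp only [sum_map_cone_cons, coboundary_cons, coboundary_add, Multiset.sum_map_add, ih]
    linear_combination CharTwo.add_self_eq_zero (φ (f x :: l))

variable {f e}

theorem length_of_mem_cone {l t : List T} (ht : t ∈ cone f e l) : t.length = l.length + 1 := by
  induction l generalizing t with
  | nil => simp_all [cone]
  | cons x l ih =>
    rw [cone, Multiset.mem_cons, Multiset.mem_map] at ht
    obtain rfl | ⟨u, hu, rfl⟩ := ht
    · rfl
    · simp [ih hu]

theorem mem_of_mem_cone {l t : List T} (ht : t ∈ cone f e l) {y : T} (hy : y ∈ t) :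
    y = e ∨ y ∈ l ∨ ∃ x ∈ l, f x = y := by
  induction l generalizing t with
  | nil => simp_all [cone]
  | cons x l ih =>
    rw [cone, Multiset.mem_cons, Multiset.mem_map] at ht
    obtain rfl | ⟨u, hu, rfl⟩ := ht
    · grind
    · obtain rfl | hy := List.mem_cons.1 hy
      · exact Or.inr (Or.inr ⟨x, by simp, rfl⟩)
      · grind

theorem pairwise_ge_of_mem_cone [Preorder T] (hf : Monotone f) (hle : ∀ x, x ≤ f x)
    (he : ∀ x, e ≤ f x) {l t : List T} (hl : l.Pairwise (· ≥ ·)) (ht : t ∈ cone f e l) :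
    t.Pairwise (· ≥ ·) := by
  induction l generalizing t with
  | nil => simp_all [cone]
  | cons x l ih =>
    obtain ⟨hx, hl'⟩ := List.pairwise_cons.1 hl
    rw [cone, Multiset.mem_cons, Multiset.mem_map] at ht
    obtain rfl | ⟨u, hu, rfl⟩ := ht
    · exact hl.cons fun y hy => by
        obtain rfl | hy := List.mem_cons.1 hy
        exacts [hle y, (hx y hy).trans (hle x)]
    · refine (ih hl' hu).cons fun y hy => ?_
      obtain rfl | hy | ⟨z, hz, rfl⟩ := mem_of_mem_cone hu hy
      exacts [he x, (hx y hy).trans (hle x), hf (hx z hz)]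

end Cone

section SignedSets

/-- A signed set, encoded as the pair of its positive and its negative part. The antipode is
`Prod.swap`, and the product order is conformal inclusion. -/
abbrev SetPair (α : Type*) : Type _ := Finset α × Finset α

variable {α : Type*}

/-- The pair `X` is a nonzero signed set on the ground set `s`. These are the vertices of the
barycentric subdivision of the octahedral sphere on `s`. -/
structure IsSignedSet (s : Finset α) (X : SetPair α) : Prop where
  fst_subset : X.1 ⊆ s
  snd_subset : X.2 ⊆ s
  disjoint : Disjoint X.1 X.2
  ne_bot : X ≠ ⊥

variable {s t : Finset α} {X : SetPair α}

theorem IsSignedSet.mono (hX : IsSignedSet s X) (hst : s ⊆ t) : IsSignedSet t X :=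
  ⟨hX.fst_subset.trans hst, hX.snd_subset.trans hst, hX.disjoint, hX.ne_bot⟩

theorem IsSignedSet.swap (hX : IsSignedSet s X) : IsSignedSet s X.swap :=
  ⟨hX.snd_subset, hX.fst_subset, hX.disjoint.symm, fun h => hX.ne_bot (Prod.swap_injective h)⟩

theorem IsSignedSet.fst_ne_snd (hX : IsSignedSet s X) : X.1 ≠ X.2 := fun h =>
  hX.ne_bot (Prod.ext (disjoint_self.1 (h ▸ hX.disjoint)) (disjoint_self.1 (h ▸ hX.disjoint)))

theorem IsSignedSet.card_pos (hX : IsSignedSet s X) : 0 < X.1.card + X.2.card := by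
  by_contra! h
  exact hX.ne_bot (Prod.ext (Finset.card_eq_zero.1 (by omega)) (Finset.card_eq_zero.1 (by omega)))

variable [DecidableEq α]

/-- Add the point `a` with positive sign to a signed set. -/
def insertPos (a : α) (X : SetPair α) : SetPair α := (insert a X.1, X.2)

theorem insertPos_mono (a : α) : Monotone (insertPos a) := fun _ _ h =>
  ⟨Finset.insert_subset_insert a h.1, h.2⟩

theorem le_insertPos (a : α) (X : SetPair α) : X ≤ insertPos a X :=
  ⟨Finset.subset_insert a X.1, le_rfl⟩

theorem isSignedSet_insertPos {a : α} (ha : a ∉ s) (h₁ : X.1 ⊆ s) (h₂ : X.2 ⊆ s)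
    (hX : Disjoint X.1 X.2) : IsSignedSet (insert a s) (insertPos a X) where
  fst_subset := Finset.insert_subset_insert a h₁
  snd_subset := h₂.trans (Finset.subset_insert a s)
  disjoint := Finset.disjoint_insert_left.2 ⟨fun h => ha (h₂ h), hX⟩
  ne_bot h := Finset.insert_ne_empty a X.1 (congrArg Prod.fst h)

end SignedSets

section Flags

variable {α : Type*}

/-- A flag of nonzero signed sets on `s`, listed downwards. -/
structure IsFlag (s : Finset α) (t : List (SetPair α)) : Prop where
  pairwise_ge : t.Pairwise (· ≥ ·)
  isSignedSet : ∀ X ∈ t, IsSignedSet s X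

theorem IsFlag.map_swap {s : Finset α} {t : List (SetPair α)} (ht : IsFlag s t) :
    IsFlag s (t.map Prod.swap) where
  pairwise_ge := List.pairwise_map.2 (ht.pairwise_ge.imp Prod.swap_le_swap.2)
  isSignedSet := List.forall_mem_map.2 fun X hX => (ht.isSignedSet X hX).swap

variable [DecidableEq α]

/-- The cap over a chain `K`: its cone with apex the positive singleton at `a`, a disc bounded by
`K` when `K` is a cycle. -/
def cap (a : α) (K : Multiset (List (SetPair α))) :
    Multiset (List (SetPair α)) :=
  K.bind (cone (insertPos a) (insertPos a ⊥))

/-- The maximal flags, listed downwards, of nonzero signed sets on the points of a list. They are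
the top-dimensional simplices of the barycentric subdivision of the octahedral sphere, here built
as the union of a cap and its antipode. -/
def flags : List α → Multiset (List (SetPair α))
  | [] => {[]}
  | a :: l => cap a (flags l) + (cap a (flags l)).map (List.map Prod.swap)

theorem map_swap_flags (l : List α) : (flags l).map (List.map Prod.swap) = flags l := by
  cases l with
  | nil => rfl
  | cons a l => simp [flags, add_comm, Function.comp_def]

theorem sum_map_flags_cons (φ : List (SetPair α) → ZMod 2) (a : α) (l : List α) :
    ((flags (a :: l)).map φ).sum =
      ((cap a (flags l)).map fun t => φ t + φ (t.map Prod.swap)).sum := by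
  simp [flags, Multiset.sum_map_add]

theorem sum_map_coboundary_cap (φ : List (SetPair α) → ZMod 2) (a : α)
    {K : Multiset (List (SetPair α))}
    (hK : ∀ ψ : List (SetPair α) → ZMod 2, (K.map (coboundary ψ)).sum = 0) :
    ((cap a K).map (coboundary φ)).sum = (K.map φ).sum := by
  simp [cap, Multiset.map_bind, Multiset.sum_bind, sum_map_coboundary_cone, Multiset.sum_map_add,
    hK]

theorem sum_map_coboundary_flags (φ : List (SetPair α) → ZMod 2) (l : List α) :
    ((flags l).map (coboundary φ)).sum = 0 := by
  induction l generalizing φ with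
  | nil => simp [flags, coboundary_nil]
  | cons a l ih =>
    have hswap : ((flags l).map fun t => φ (t.map Prod.swap)).sum = ((flags l).map φ).sum := by
      conv_rhs => rw [← map_swap_flags l, Multiset.map_map]
      rfl
    simp only [sum_map_flags_cons, coboundary_map, Multiset.sum_map_add,
      sum_map_coboundary_cap _ a ih, hswap, CharTwo.add_self_eq_zero]

theorem sum_map_flags_cons_eq {φ : List (SetPair α) → ZMod 2} {a : α} {l : List α}
    (hφ : ∀ t ∈ cap a (flags l), coboundary φ t = φ t + φ (t.map Prod.swap)) :
    ((flags (a :: l)).map φ).sum = ((flags l).map φ).sum := by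
  rw [sum_map_flags_cons, ← Multiset.map_congr rfl hφ,
    sum_map_coboundary_cap φ a fun ψ => sum_map_coboundary_flags ψ l]

theorem IsFlag.of_mem_cone {s : Finset α} {a : α} (ha : a ∉ s)
    {t u : List (SetPair α)} (hu : IsFlag s u)
    (ht : t ∈ cone (insertPos a) (insertPos a ⊥) u) : IsFlag (insert a s) t where
  pairwise_ge := pairwise_ge_of_mem_cone (insertPos_mono a) (le_insertPos a)
    (fun _ => insertPos_mono a bot_le) hu.pairwise_ge ht
  isSignedSet Y hY := by
    obtain rfl | hY | ⟨X, hX, rfl⟩ := mem_of_mem_cone ht hY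
    · exact isSignedSet_insertPos ha (Finset.empty_subset s) (Finset.empty_subset s)
        (Finset.disjoint_empty_left ∅)
    · exact (hu.isSignedSet Y hY).mono (Finset.subset_insert a s)
    · have hX := hu.isSignedSet X hX
      exact isSignedSet_insertPos ha hX.fst_subset hX.snd_subset hX.disjoint

theorem isFlag_of_mem_flags {l : List α} (hl : l.Nodup) {t : List (SetPair α)}
    (ht : t ∈ flags l) : IsFlag l.toFinset t := by
  induction l generalizing t with
  | nil => simp_all [flags, IsFlag.mk]
  | cons a l ih =>
    have hcap : ∀ u ∈ cap a (flags l), IsFlag (a :: l).toFinset u := fun u hu => by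
      obtain ⟨v, hv, hu⟩ := Multiset.mem_bind.1 hu
      rw [List.toFinset_cons]
      exact (ih hl.of_cons hv).of_mem_cone (by simpa using hl.notMem) hu
    rw [flags, Multiset.mem_add, Multiset.mem_map] at ht
    obtain ht | ⟨u, hu, rfl⟩ := ht
    exacts [hcap t ht, (hcap u hu).map_swap]

theorem length_of_mem_flags {l : List α} {t : List (SetPair α)} (ht : t ∈ flags l) :
    t.length = l.length := by
  induction l generalizing t with
  | nil => simp_all [flags]
  | cons a l ih =>
    have hcap : ∀ u ∈ cap a (flags l), u.length = (a :: l).length := fun u hu => by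
      obtain ⟨v, hv, hu⟩ := Multiset.mem_bind.1 hu
      rw [length_of_mem_cone hu, ih hv, List.length_cons]
    rw [flags, Multiset.mem_add, Multiset.mem_map] at ht
    obtain ht | ⟨u, hu, rfl⟩ := ht
    · exact hcap t ht
    · rw [List.length_map, hcap u hu]

end Flags

section Alternation

/-- The indicator that a list of signs alternates with first sign opposite to `q`. -/
def alternating (q : Bool) (w : List Bool) : ZMod 2 :=
  if (q :: w).IsChain (· ≠ ·) then 1 else 0

theorem alternating_nil (q : Bool) : alternating q [] = 1 := by simp [alternating]

theorem alternating_cons (q b : Bool) (w : List Bool) :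
    alternating q (b :: w) = if q = b then 0 else alternating b w := by
  simp only [alternating, List.isChain_cons_cons]
  split_ifs <;> simp_all

theorem alternating_map_not (q : Bool) (w : List Bool) :
    alternating q (w.map not) = alternating (!q) w := by
  induction w generalizing q with
  | nil => simp only [List.map_nil, alternating_nil]
  | cons b w ih =>
    simp only [List.map_cons, alternating_cons, ih, Bool.not_not, Bool.not_eq_eq_eq_not]

theorem coboundary_alternating (q : Bool) (w : List Bool) :
    coboundary (alternating q) w = alternating q w + alternating (!q) w := by
  induction w generalizing q with
  | nil => simp [coboundary_nil, alternating_nil, CharTwo.add_self_eq_zero]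
  | cons b w ih =>
    rw [coboundary_cons]
    obtain rfl | rfl : b = q ∨ b = !q := by cases b <;> cases q <;> simp
    · simp [alternating_cons, coboundary_zero]
    · simp only [alternating_cons, Bool.eq_not_self, if_false, if_true, ih, Bool.not_not]
      linear_combination CharTwo.add_self_eq_zero (alternating q w)

variable {L : Type*} [LinearOrder L]

/-- The order on signed labels by magnitude, then by sign: the label `(j, b)` has magnitude `j` and
sign `b`. Ties in magnitude are broken only so that sorting is well defined. -/
abbrev LabelLE : L × Bool → L × Bool → Prop := Prod.Lex (· < ·) (· ≤ ·)

/-- The signs of a multiset of signed labels, listed by increasing magnitude. -/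
def sortedSigns (m : Multiset (L × Bool)) : List Bool :=
  (m.sort LabelLE).map Prod.snd

/-- No two labels have the same magnitude and opposite signs. -/
def NoComplementary (m : Multiset (L × Bool)) : Prop :=
  Set.InjOn Prod.fst {a | a ∈ m}

theorem sortedSigns_map_not {m : Multiset (L × Bool)} (hm : NoComplementary m) :
    sortedSigns (m.map (Prod.map id not)) = (sortedSigns m).map not := by
  rw [sortedSigns, ← Multiset.map_sort (r := LabelLE), sortedSigns]
  · simp
  · intro a ha b hb
    have := @hm a ha b hb
    simp only [Prod.lex_def, Prod.map_fst, Prod.map_snd, id]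
    grind

theorem sortedSigns_coe_of_pairwise {l : List (L × Bool)} (hl : l.Pairwise LabelLE) :
    sortedSigns (l : Multiset (L × Bool)) = l.map Prod.snd := by
  rw [sortedSigns, (Multiset.coe_eq_coe.1 (Multiset.sort_eq _ _)).eq_of_pairwise'
    (Multiset.pairwise_sort _ _) hl]

theorem coboundary_alternating_sortedSigns (q : Bool) {l : List (L × Bool)}
    (hl : NoComplementary (l : Multiset (L × Bool))) :
    coboundary (fun t => alternating q (sortedSigns (t : Multiset (L × Bool)))) l =
      alternating q (sortedSigns (l : Multiset (L × Bool))) +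
        alternating q (sortedSigns (l.map (Prod.map id not) : Multiset (L × Bool))) := by
  let w := (l : Multiset (L × Bool)).sort LabelLE
  have hw : w.Pairwise LabelLE := Multiset.pairwise_sort _ _
  calc coboundary (fun t => alternating q (sortedSigns (t : Multiset (L × Bool)))) l
    _ = coboundary (fun t => alternating q (sortedSigns (t : Multiset (L × Bool)))) w :=
      coboundary_eq_of_perm (fun m => alternating q (sortedSigns m))
        (Multiset.coe_eq_coe.1 (Multiset.sort_eq _ _)).symm
    _ = coboundary (fun t => alternating q (t.map Prod.snd)) w :=
      congrArg Multiset.sum <| Multiset.map_congr rfl fun t ht => by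
        rw [sortedSigns_coe_of_pairwise (hw.sublist (sublist_of_mem_facets ht))]
    _ = coboundary (alternating q) (sortedSigns (l : Multiset (L × Bool))) :=
      (coboundary_map Prod.snd (alternating q) w).symm
    _ = _ := by
      rw [coboundary_alternating, ← alternating_map_not, ← sortedSigns_map_not hl,
        Multiset.map_coe]

theorem nodup_of_alternating_ne_zero {q : Bool} {m : Multiset (L × Bool)}
    (h : alternating q (sortedSigns m) ≠ 0) : m.Nodup := by
  have hne : (sortedSigns m).IsChain (· ≠ ·) := by
    by_contra hne
    exact h (if_neg fun hq => hne hq.tail)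
  rw [sortedSigns, List.isChain_map] at hne
  have hle := (m.pairwise_sort LabelLE).isChain
  have hlt : (m.sort LabelLE).IsChain (Prod.Lex (· < ·) (· < ·)) := by
    rw [List.isChain_iff_getElem] at hne hle ⊢
    intro i hi
    have h₁ := hne i hi
    have h₂ := hle i hi
    exact Prod.lex_def.2 ((Prod.lex_def.1 h₂).imp_right fun h₂ => ⟨h₂.1, h₂.2.lt_of_ne h₁⟩)
  rw [← m.sort_eq LabelLE, Multiset.coe_nodup]
  exact (List.isChain_iff_pairwise.1 hlt).imp fun hab hne => by
    simp [hne, Prod.lex_def] at hab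

theorem alternating_eq_zero_of_card_lt {m : Multiset (L × Bool)} (hm : NoComplementary m)
    {M : Finset L} (hM : ∀ a ∈ m, a.1 ∈ M) (hcard : M.card < m.card) (q : Bool) :
    alternating q (sortedSigns m) = 0 := by
  by_contra h
  have hnodup : (m.map Prod.fst).Nodup :=
    (nodup_of_alternating_ne_zero h).map_on fun a ha b hb => hm ha hb
  have hle : m.map Prod.fst ≤ M.val :=
    (Multiset.le_iff_subset hnodup).2 fun j hj => by
      obtain ⟨a, ha, rfl⟩ := Multiset.mem_map.1 hj
      exact hM a ha
  have := Multiset.card_le_card hle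
  rw [Multiset.card_map, Finset.card_val] at this
  omega

end Alternation

section FanTucker

variable {α L : Type*} {s : Finset α} {lab : SetPair α → L × Bool} {t : List (SetPair α)}

theorem IsFlag.noComplementary_map (ht : IsFlag s t)
    (hcompl : ∀ X Y, IsSignedSet s X → IsSignedSet s Y → X ≤ Y →
      (lab X).1 = (lab Y).1 → lab X = lab Y) :
    NoComplementary (t.map lab : Multiset (L × Bool)) := by
  have hpair : t.Pairwise fun X Y => (lab X).1 = (lab Y).1 → lab X = lab Y :=
    ht.pairwise_ge.imp_of_mem fun hX hY hYX h =>
      (hcompl _ _ (ht.isSignedSet _ hY) (ht.isSignedSet _ hX) hYX h.symm).symm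
  have : Std.Symm fun X Y => (lab X).1 = (lab Y).1 → lab X = lab Y :=
    ⟨fun _ _ h h' => (h h'.symm).symm⟩
  rintro a ha b hb hab
  obtain ⟨X, hX, rfl⟩ := List.mem_map.1 ha
  obtain ⟨Y, hY, rfl⟩ := List.mem_map.1 hb
  exact hpair.forall_of_forall (fun _ _ _ => rfl) hX hY hab

theorem IsFlag.map_label_swap (ht : IsFlag s t)
    (hswap : ∀ X, IsSignedSet s X → lab X.swap = ((lab X).1, !(lab X).2)) :
    (t.map Prod.swap).map lab = (t.map lab).map (Prod.map id not) := by
  rw [List.map_map, List.map_map]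
  exact List.map_congr_left fun X hX => hswap X (ht.isSignedSet X hX)

theorem octahedral_fan [DecidableEq α] [LinearOrder L] {l : List α} (hl : l.Nodup)
    (hswap : ∀ X, IsSignedSet l.toFinset X → lab X.swap = ((lab X).1, !(lab X).2))
    (hcompl : ∀ X Y, IsSignedSet l.toFinset X → IsSignedSet l.toFinset Y → X ≤ Y →
      (lab X).1 = (lab Y).1 → lab X = lab Y) (q : Bool) :
    ((flags l).map fun t =>
      alternating q (sortedSigns (t.map lab : Multiset (L × Bool)))).sum = 1 := by
  induction l with
  | nil => simp [flags, sortedSigns, alternating_nil]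
  | cons a l ih =>
    have hsub : l.toFinset ⊆ (a :: l).toFinset := by
      rw [List.toFinset_cons]
      exact Finset.subset_insert a l.toFinset
    rw [sum_map_flags_cons_eq, ih hl.of_cons (fun X hX => hswap X (hX.mono hsub))
      fun X Y hX hY => hcompl X Y (hX.mono hsub) (hY.mono hsub)]
    intro t ht
    have hflag := isFlag_of_mem_flags hl (Multiset.mem_add.2 (Or.inl ht))
    rw [hflag.map_label_swap hswap,
      ← coboundary_map lab fun w => alternating q (sortedSigns (w : Multiset (L × Bool))),
      coboundary_alternating_sortedSigns q (hflag.noComplementary_map hcompl)]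

theorem octahedral_tucker {M : Finset L} (hM : M.card < s.card)
    (hlab : ∀ X, IsSignedSet s X → (lab X).1 ∈ M)
    (hswap : ∀ X, IsSignedSet s X → lab X.swap = ((lab X).1, !(lab X).2)) :
    ∃ X Y, IsSignedSet s X ∧ IsSignedSet s Y ∧ X ≤ Y ∧
      (lab X).1 = (lab Y).1 ∧ (lab X).2 ≠ (lab Y).2 := by
  classical
  let _ : LinearOrder L := IsWellOrder.linearOrder WellOrderingRel
  by_contra! hcon
  have hcompl : ∀ X Y, IsSignedSet s X → IsSignedSet s Y → X ≤ Y →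
      (lab X).1 = (lab Y).1 → lab X = lab Y :=
    fun X Y hX hY hXY h => Prod.ext h (hcon X Y hX hY hXY h)
  have hzero : ∀ t ∈ flags s.toList,
      alternating false (sortedSigns (t.map lab : Multiset (L × Bool))) = 0 := fun t ht => by
    have hflag : IsFlag s t := by simpa using isFlag_of_mem_flags s.nodup_toList ht
    refine alternating_eq_zero_of_card_lt (hflag.noComplementary_map hcompl) (M := M) ?_ ?_ false
    · exact List.forall_mem_map.2 fun X hX => hlab X (hflag.isSignedSet X hX)
    · simpa [length_of_mem_flags ht] using hM
  have hone := octahedral_fan (lab := lab) s.nodup_toList (by simpa using hswap)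
    (by simpa using hcompl) false
  rw [Multiset.map_congr rfl hzero, Multiset.sum_map_zero] at hone
  exact zero_ne_one hone

end FanTucker

section Dolnikov

variable {α β : Type*} (F : Set (Finset α)) (c : Finset α → β)

/-- The set `A` contains a member of the family `F` of colour `i`. -/
def ContainsColor (A : Finset α) (i : β) : Prop := ∃ S ∈ F, S ⊆ A ∧ c S = i

/-- A colour of some member of `F` contained in the positive or the negative part of `X`, with a
junk value if there is none. Using `Classical.epsilon` makes the choice depend only on the set of
such colours, hence invariant under the antipode. -/
noncomputable def containedColor (X : SetPair α) : β :=
  @Classical.epsilon β ⟨c ∅⟩ fun i => ContainsColor F c X.1 i ∨ ContainsColor F c X.2 i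

open Classical in
/-- The labelling of signed sets attached to the colouring `c` of `F`: the magnitude is the size of
a signed set of size at most `m`, and a contained colour otherwise. The well-order merely
provides a choice of sign for small sets that is reversed by the antipode. -/
noncomputable def signedLabel (m : ℕ) (X : SetPair α) : (ℕ ⊕ β) × Bool :=
  if X.1.card + X.2.card ≤ m then
    (.inl (X.1.card + X.2.card), decide (WellOrderingRel X.1 X.2))
  else (.inr (containedColor F c X), decide (ContainsColor F c X.1 (containedColor F c X)))

variable {F c}

theorem ContainsColor.mono {A B : Finset α} {i : β} (hA : ContainsColor F c A i) (hAB : A ⊆ B) :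
    ContainsColor F c B i := by
  obtain ⟨S, hS, hSA, hi⟩ := hA
  exact ⟨S, hS, hSA.trans hAB, hi⟩

theorem ContainsColor.exists_disjoint {A B : Finset α} {i : β} (hA : ContainsColor F c A i)
    (hB : ContainsColor F c B i) (hAB : Disjoint A B) :
    ∃ S ∈ F, ∃ T ∈ F, Disjoint S T ∧ c S = c T := by
  obtain ⟨S, hS, hSA, hi⟩ := hA
  obtain ⟨T, hT, hTB, hj⟩ := hB
  exact ⟨S, hS, T, hT, hAB.mono hSA hTB, hi.trans hj.symm⟩

theorem containedColor_swap (X : SetPair α) : containedColor F c X.swap = containedColor F c X := by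
  simp only [containedColor, Prod.fst_swap, Prod.snd_swap, or_comm]

theorem containsColor_containedColor {X : SetPair α} (hX : ∃ S ∈ F, S ⊆ X.1 ∨ S ⊆ X.2) :
    ContainsColor F c X.1 (containedColor F c X) ∨
      ContainsColor F c X.2 (containedColor F c X) := by
  refine Classical.epsilon_spec
    (p := fun i => ContainsColor F c X.1 i ∨ ContainsColor F c X.2 i) ?_
  obtain ⟨S, hS, hSX⟩ := hX
  exact ⟨c S, hSX.imp (fun h => ⟨S, hS, h, rfl⟩) fun h => ⟨S, hS, h, rfl⟩⟩

variable {s : Finset α} {m : ℕ} {X Y : SetPair α}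

theorem signedLabel_fst_mem {C : Finset β} (hc : ∀ A ∈ F, c A ∈ C) (hX : IsSignedSet s X)
    (hF : m < X.1.card + X.2.card → ∃ S ∈ F, S ⊆ X.1 ∨ S ⊆ X.2) :
    (signedLabel F c m X).1 ∈ (Finset.Icc 1 m).disjSum C := by
  unfold signedLabel
  split_ifs with h
  · exact Finset.inl_mem_disjSum.2 (Finset.mem_Icc.2 ⟨hX.card_pos, h⟩)
  · obtain ⟨S, hS, -, hi⟩ | ⟨S, hS, -, hi⟩ :=
      containsColor_containedColor (c := c) (hF (not_le.1 h)) <;>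
    exact Finset.inr_mem_disjSum.2 (hi ▸ hc S hS)

theorem wellOrderingRel_swap_iff {γ : Type*} {a b : γ} (hab : a ≠ b) :
    WellOrderingRel b a ↔ ¬WellOrderingRel a b :=
  ⟨asymm, fun h => ((trichotomous_of WellOrderingRel a b).resolve_left h).resolve_left hab⟩

theorem signedLabel_swap (hproper : ∀ A ∈ F, ∀ B ∈ F, Disjoint A B → c A ≠ c B)
    (hX : IsSignedSet s X) (hF : m < X.1.card + X.2.card → ∃ S ∈ F, S ⊆ X.1 ∨ S ⊆ X.2) :
    signedLabel F c m X.swap = ((signedLabel F c m X).1, !(signedLabel F c m X).2) := by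
  unfold signedLabel
  simp only [Prod.fst_swap, Prod.snd_swap, containedColor_swap, add_comm X.2.card]
  split_ifs with h
  · refine Prod.ext rfl (Bool.eq_iff_iff.2 ?_)
    simpa using wellOrderingRel_swap_iff hX.fst_ne_snd
  · have hiff : ContainsColor F c X.2 (containedColor F c X) ↔
        ¬ContainsColor F c X.1 (containedColor F c X) := by
      refine ⟨fun h₂ h₁ => ?_, (containsColor_containedColor (hF (not_le.1 h))).resolve_left⟩
      obtain ⟨S, hS, T, hT, hST, hcST⟩ := h₁.exists_disjoint h₂ hX.disjoint
      exact hproper S hS T hT hST hcST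
    refine Prod.ext rfl (Bool.eq_iff_iff.2 ?_)
    simpa [containedColor_swap] using hiff

theorem exists_disjoint_of_signedLabel_complementary
    (hF : m < X.1.card + X.2.card → ∃ S ∈ F, S ⊆ X.1 ∨ S ⊆ X.2) (hY : Disjoint Y.1 Y.2)
    (hXY : X ≤ Y) (hfst : (signedLabel F c m X).1 = (signedLabel F c m Y).1)
    (hsnd : (signedLabel F c m X).2 ≠ (signedLabel F c m Y).2) :
    ∃ A ∈ F, ∃ B ∈ F, Disjoint A B ∧ c A = c B := by
  unfold signedLabel at hfst hsnd
  split_ifs at hfst hsnd with hXm hYm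
  · have hcard := Sum.inl_injective hfst
    have h₁ := Finset.card_le_card hXY.1
    have h₂ := Finset.card_le_card hXY.2
    have : X = Y := Prod.ext (Finset.eq_of_subset_of_card_le hXY.1 (by omega))
      (Finset.eq_of_subset_of_card_le hXY.2 (by omega))
    exact absurd (this ▸ rfl) hsnd
  · have hcol : containedColor F c X = containedColor F c Y := Sum.inr_injective hfst
    rw [← hcol] at hsnd
    have hX₁ : ¬ContainsColor F c X.1 (containedColor F c X) := fun h =>
      hsnd (by simp [h, h.mono hXY.1])
    have hY₁ : ContainsColor F c Y.1 (containedColor F c X) := by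
      by_contra h
      exact hsnd (by simp [h, hX₁])
    have hX₂ := (containsColor_containedColor (hF (not_le.1 hXm))).resolve_left hX₁
    exact hY₁.exists_disjoint (hX₂.mono hXY.2) hY

theorem dolnikov {C : Finset β} (hc : ∀ A ∈ F, c A ∈ C)
    (hF : ∀ A ⊆ s, ∀ B ⊆ s, Disjoint A B → m < A.card + B.card → ∃ S ∈ F, S ⊆ A ∨ S ⊆ B)
    (hm : m + C.card < s.card) :
    ∃ A ∈ F, ∃ B ∈ F, Disjoint A B ∧ c A = c B := by
  by_contra! hproper
  have hF' : ∀ X, IsSignedSet s X → m < X.1.card + X.2.card → ∃ S ∈ F, S ⊆ X.1 ∨ S ⊆ X.2 :=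
    fun X hX => hF X.1 hX.fst_subset X.2 hX.snd_subset hX.disjoint
  obtain ⟨X, Y, hX, hY, hXY, hfst, hsnd⟩ :=
    octahedral_tucker (M := (Finset.Icc 1 m).disjSum C) (by simpa using hm)
      (fun X hX => signedLabel_fst_mem hc hX (hF' X hX))
      fun X hX => signedLabel_swap hproper hX (hF' X hX)
  obtain ⟨A, hA, B, hB, hAB, hcAB⟩ :=
    exists_disjoint_of_signedLabel_complementary (hF' X hX) hY.disjoint hXY hfst hsnd
  exact hproper A hA B hB hAB hcAB

end Dolnikov

end KneserLovasz

theorem kneser_lovasz_general {α β : Type*} {s : Finset α} {k : ℕ} {c : Finset α → β}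
    {C : Finset β} (hc : ∀ A ⊆ s, A.card = k → c A ∈ C) (hC : C.card + 2 * k ≤ s.card + 1) :
    ∃ A B : Finset α, A ⊆ s ∧ B ⊆ s ∧ A.card = k ∧ B.card = k ∧ Disjoint A B ∧ c A = c B := by
  obtain rfl | hk := k.eq_zero_or_pos
  · exact ⟨∅, ∅, by simp⟩
  have hlarge : ∀ A ⊆ s, ∀ B ⊆ s, Disjoint A B → 2 * k - 2 < A.card + B.card →
      ∃ S ∈ {S | S ⊆ s ∧ S.card = k}, S ⊆ A ∨ S ⊆ B := by
    intro A hA B hB _ hcard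
    obtain h | h : k ≤ A.card ∨ k ≤ B.card := by omega
    · obtain ⟨S, hSA, hS⟩ := Finset.exists_subset_card_eq h
      exact ⟨S, ⟨hSA.trans hA, hS⟩, Or.inl hSA⟩
    · obtain ⟨S, hSB, hS⟩ := Finset.exists_subset_card_eq h
      exact ⟨S, ⟨hSB.trans hB, hS⟩, Or.inr hSB⟩
  obtain ⟨A, ⟨hAs, hAk⟩, B, ⟨hBs, hBk⟩, hAB, hcAB⟩ :=
    KneserLovasz.dolnikov (fun A hA => hc A hA.1 hA.2) hlarge (by omega)
  exact ⟨A, B, hAs, hBs, hAk, hBk, hAB, hcAB⟩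

theorem kneser_lovasz (n k : ℕ) (hk : 1 ≤ k) (hn : 2 * k ≤ n)
    (c : Finset ℕ → ℕ)
    (hc : ∀ A ⊆ Finset.Icc 1 n, A.card = k → c A ∈ Finset.Icc 1 (n - 2 * k + 1)) :
    ∃ A B : Finset ℕ, A ⊆ Finset.Icc 1 n ∧ B ⊆ Finset.Icc 1 n ∧
      A.card = k ∧ B.card = k ∧ Disjoint A B ∧ c A = c B :=
  kneser_lovasz_general hc (by simp only [Nat.card_Icc]; omega)
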